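/- Assume 0 < η_i < 1/‖A_i‖² for i = 1, …, p and let x† denote the x₀-minimal norm solution of A x = y. Then the exact-data heavy-ball iterates satisfy lim_{n→∞} E[‖x_n − x†‖²] = 0. -/

import Mathlib

/-- Expectation with respect to the first `m` i.i.d. uniformly distributed indices:
for a quantity `f` determined by the coordinates `i_0, …, i_{m-1}` of the sample path,
`avg p hp m f = p^{-m} ∑_{(i_0,…,i_{m-1}) ∈ {1,…,p}^m} f`. -/
noncomputable def avg (p : ℕ) (hp : 0 < p) (m : ℕ) (f : (ℕ → Fin p) → ℝ) : ℝ :=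
  (∑ σ : Fin m → Fin p, f (fun k => if h : k < m then σ ⟨k, h⟩ else ⟨0, hp⟩)) / (p : ℝ) ^ m

/-!
Put `z n = e n + n • (e n - e (n - 1))` for the error `e`. The heavy-ball recursion says exactly
that `z` performs the stochastic gradient steps while `e n` is the running mean of `z 0, …, z n`.
Rescaling `A i` by `√(η i)` normalises the step sizes to `1`; let `T` be the rescaled family and
`B` the single operator `x ↦ (T i x)ᵢ`.

The energy `p ‖z n‖² + n ‖B (e (n - 1))‖²` decreases in mean by at least a multiple of
`R n = E ‖B (e n)‖²`, so `R` is summable and `n R n` is bounded. Averaging the telescoped recursion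
for `z` gives `‖e n‖² ≤ ⟪e 0, e n⟫ + ‖B (e n)‖ ∑ j < n, ‖B (e j)‖`. The expectation of the last
term is at most `√(R n) ∑ j < n, √(R j)`, which tends to `0`. As `e 0` is orthogonal to
`ker B`, it is a limit of vectors `B† v`, so `⟪e 0, e n⟫` is also controlled by `‖B (e n)‖`.
-/

open Filter Topology Finset InnerProductSpace

section Average

variable {p : ℕ} {hp : 0 < p}

lemma avg_add (m : ℕ) (f g : (ℕ → Fin p) → ℝ) :
    avg p hp m (fun ω => f ω + g ω) = avg p hp m f + avg p hp m g := by
  simp only [avg, sum_add_distrib, add_div]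

lemma avg_const_mul (m : ℕ) (c : ℝ) (f : (ℕ → Fin p) → ℝ) :
    avg p hp m (fun ω => c * f ω) = c * avg p hp m f := by
  simp only [avg, ← mul_sum, mul_div_assoc]

lemma avg_sum {ι : Type*} (s : Finset ι) (m : ℕ) (f : ι → (ℕ → Fin p) → ℝ) :
    avg p hp m (fun ω => ∑ i ∈ s, f i ω) = ∑ i ∈ s, avg p hp m (f i) := by
  simp only [avg]
  rw [sum_comm, sum_div]

lemma avg_const (m : ℕ) (c : ℝ) : avg p hp m (fun _ => c) = c := by
  have : (p : ℝ) ≠ 0 := by exact_mod_cast hp.ne'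
  simp [avg, this]

lemma avg_mono (m : ℕ) {f g : (ℕ → Fin p) → ℝ} (h : ∀ ω, f ω ≤ g ω) :
    avg p hp m f ≤ avg p hp m g := by
  unfold avg
  gcongr
  exact h _

lemma avg_nonneg (m : ℕ) {f : (ℕ → Fin p) → ℝ} (h : ∀ ω, 0 ≤ f ω) : 0 ≤ avg p hp m f :=
  (avg_const m 0).ge.trans (avg_mono m h)

lemma avg_mul_le_sqrt_mul_sqrt (m : ℕ) (f g : (ℕ → Fin p) → ℝ) :
    avg p hp m (fun ω => f ω * g ω)
      ≤ √(avg p hp m fun ω => f ω ^ 2) * √(avg p hp m fun ω => g ω ^ 2) := by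
  have hpm : (0 : ℝ) ≤ p ^ m := by positivity
  simp only [avg]
  rw [Real.sqrt_div' _ hpm, Real.sqrt_div' _ hpm, div_mul_div_comm, Real.mul_self_sqrt hpm]
  gcongr
  exact Real.sum_mul_le_sqrt_mul_sqrt _ _ _

lemma avg_succ (m : ℕ) (f : (ℕ → Fin p) → ℝ) :
    avg p hp (m + 1) f
      = avg p hp m (fun ω => (p : ℝ)⁻¹ * ∑ i, f (Function.update ω m i)) := by
  have extend_snoc : ∀ (i : Fin p) (σ : Fin m → Fin p),
      (fun k => if h : k < m + 1 then (Fin.snoc σ i : Fin (m + 1) → Fin p) ⟨k, h⟩ else ⟨0, hp⟩)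
        = Function.update (fun k => if h : k < m then σ ⟨k, h⟩ else ⟨0, hp⟩) m i := by
    intro i σ
    funext k
    rcases lt_trichotomy k m with h | rfl | h
    · simp [Function.update_of_ne h.ne, h, h.trans (Nat.lt_succ_self m), Fin.snoc]
    · simp [Fin.snoc]
    · simp [Function.update_of_ne h.ne', not_lt.2 h.le, not_lt.2 (Nat.succ_le_of_lt h)]
  unfold avg
  rw [← (Fin.snocEquiv fun _ : Fin (m + 1) => Fin p).sum_comp, Fintype.sum_prod_type, sum_comm,
    ← mul_sum, pow_succ]
  simp only [Fin.snocEquiv, Equiv.coe_fn_mk, extend_snoc]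
  field_simp

lemma avg_succ_of_dependsOn (m : ℕ) {f : (ℕ → Fin p) → ℝ} (hf : DependsOn f (Set.Iio m)) :
    avg p hp (m + 1) f = avg p hp m f := by
  have : (p : ℝ) ≠ 0 := by exact_mod_cast hp.ne'
  have hupdate : ∀ ω i, f (Function.update ω m i) = f ω := fun ω i =>
    hf fun k hk => Function.update_of_ne (ne_of_lt hk) _ _
  simp [avg_succ, hupdate, this]

lemma avg_of_dependsOn {m n : ℕ} (hmn : m ≤ n) {f : (ℕ → Fin p) → ℝ}
    (hf : DependsOn f (Set.Iio m)) : avg p hp n f = avg p hp m f := by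
  induction n, hmn using Nat.le_induction with
  | base => rfl
  | succ n hmn ih =>
    rw [avg_succ_of_dependsOn n (hf.mono (Set.Iio_subset_Iio hmn)), ih]

end Average

section RealSequences

variable {a : ℕ → ℝ}

lemma sum_Ico_le_sqrt_mul_tsum (ha : Summable fun n => a n ^ 2) (m n : ℕ) :
    ∑ j ∈ Ico m n, a j ≤ √(n * ∑' j, a (j + m) ^ 2) := by
  have htail : ∑ j ∈ Ico m n, a j ^ 2 ≤ ∑' j, a (j + m) ^ 2 := by
    rw [sum_Ico_eq_sum_range]
    simp only [add_comm m]
    exact ((summable_nat_add_iff m).2 ha).sum_le_tsum _ fun _ _ => sq_nonneg _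
  refine Real.le_sqrt_of_sq_le (sq_sum_le_card_mul_sum_sq.trans ?_)
  gcongr
  simp

/-- Split the sum at a fixed `m`: the head is bounded and `a n → 0`, while Cauchy-Schwarz bounds the
contribution of the tail by `√(C * ∑ j ≥ m, a j ^ 2)`, uniformly in `n`. -/
lemma tendsto_mul_sum_range_of_summable_sq (ha0 : ∀ n, 0 ≤ a n)
    (ha : Summable fun n => a n ^ 2) {C : ℝ} (hC : ∀ n : ℕ, n * a n ^ 2 ≤ C) :
    Tendsto (fun n => a n * ∑ j ∈ range n, a j) atTop (𝓝 0) := by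
  have ha_tendsto : Tendsto a atTop (𝓝 0) := by
    simpa [Real.sqrt_sq (ha0 _)] using ha.tendsto_atTop_zero.sqrt
  have htail_tendsto : Tendsto (fun m => √(C * ∑' j, a (j + m) ^ 2)) atTop (𝓝 0) := by
    simpa using ((tendsto_sum_nat_add fun n => a n ^ 2).const_mul C).sqrt
  have htail : ∀ m n, a n * ∑ j ∈ Ico m n, a j ≤ √(C * ∑' j, a (j + m) ^ 2) := fun m n =>
    calc a n * ∑ j ∈ Ico m n, a j ≤ a n * √(n * ∑' j, a (j + m) ^ 2) :=
          mul_le_mul_of_nonneg_left (sum_Ico_le_sqrt_mul_tsum ha m n) (ha0 n)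
      _ = √(n * a n ^ 2 * ∑' j, a (j + m) ^ 2) := by
          rw [mul_right_comm, Real.sqrt_mul' _ (sq_nonneg _), Real.sqrt_sq (ha0 n), mul_comm]
      _ ≤ √(C * ∑' j, a (j + m) ^ 2) :=
          Real.sqrt_le_sqrt <|
            mul_le_mul_of_nonneg_right (hC n) (tsum_nonneg fun _ => sq_nonneg _)
  refine tendsto_order.2 ⟨fun b hb => Eventually.of_forall fun n =>
    hb.trans_le (mul_nonneg (ha0 n) (sum_nonneg fun _ _ => ha0 _)), fun ε hε => ?_⟩
  obtain ⟨m, hm⟩ := (htail_tendsto.eventually_lt_const (half_pos hε)).exists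
  have hhead : Tendsto (fun n => a n * ∑ j ∈ range m, a j) atTop (𝓝 0) := by
    simpa using ha_tendsto.mul_const _
  filter_upwards [hhead.eventually_lt_const (half_pos hε), eventually_ge_atTop m] with n hn hmn
  rw [← sum_range_add_sum_Ico a hmn, mul_add]
  linarith [htail m n]

end RealSequences

section Hilbert

lemma mem_orthogonal_of_forall_norm_le {𝕜 E : Type*} [RCLike 𝕜] [NormedAddCommGroup E]
    [InnerProductSpace 𝕜 E] {K : Submodule 𝕜 E} {d : E} (h : ∀ w ∈ K, ‖d‖ ≤ ‖d - w‖) :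
    d ∈ Kᗮ := by
  rw [Submodule.mem_orthogonal']
  simpa using (K.norm_eq_iInf_iff_inner_eq_zero (u := d) K.zero_mem).1 <| le_antisymm
    (le_ciInf fun w => by simpa using h w w.2)
    (ciInf_le ⟨0, Set.forall_mem_range.2 fun _ => norm_nonneg _⟩ (0 : K))

lemma norm_sqrt_smul_lt_one {X Y : Type*} [SeminormedAddCommGroup X] [NormedSpace ℝ X]
    [SeminormedAddCommGroup Y] [NormedSpace ℝ Y] (A : X →L[ℝ] Y) {η : ℝ} (hη : 0 < η)
    (h : η < 1 / ‖A‖ ^ 2) :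
    ‖√η • A‖ < 1 := by
  have hA : 0 < ‖A‖ ^ 2 := one_div_pos.1 (hη.trans h)
  rw [← sq_lt_one_iff₀ (norm_nonneg _), norm_smul, mul_pow, Real.norm_eq_abs, sq_abs,
    Real.sq_sqrt hη.le]
  exact (lt_div_iff₀ hA).1 h

variable {X Y : Type*} [NormedAddCommGroup X] [InnerProductSpace ℝ X] [CompleteSpace X]
  [NormedAddCommGroup Y] [InnerProductSpace ℝ Y] [CompleteSpace Y]

lemma exists_inner_le_of_mem_orthogonal_ker (B : X →L[ℝ] Y) {d : X} (hd : d ∈ B.kerᗮ) {ε : ℝ}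
    (hε : 0 < ε) : ∃ K, ∀ x, ⟪d, x⟫_ℝ ≤ ε * ‖x‖ + K * ‖B x‖ := by
  rw [B.orthogonal_ker] at hd
  obtain ⟨_, ⟨v, rfl⟩, hv⟩ := Metric.mem_closure_iff.1 hd ε hε
  rw [dist_eq_norm] at hv
  refine ⟨‖v‖, fun x => ?_⟩
  calc ⟪d, x⟫_ℝ = ⟪d - B.adjoint v, x⟫_ℝ + ⟪v, B x⟫_ℝ := by
        rw [inner_sub_left, B.adjoint_inner_left, sub_add_cancel]
    _ ≤ ‖d - B.adjoint v‖ * ‖x‖ + ‖v‖ * ‖B x‖ :=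
        add_le_add (real_inner_le_norm _ _) (real_inner_le_norm _ _)
    _ ≤ ε * ‖x‖ + ‖v‖ * ‖B x‖ := by gcongr; exact hv.le

lemma norm_sub_adjoint_sq_add_le (T : X →L[ℝ] Y) {t : ℝ} (ht : 0 ≤ t) (e e' : X) :
    ‖e + t • (e - e') - T.adjoint (T e)‖ ^ 2 + (t + 1) * ‖T e‖ ^ 2
        + (1 - ‖T‖ ^ 2) * ‖T e‖ ^ 2
      ≤ ‖e + t • (e - e')‖ ^ 2 + t * ‖T e'‖ ^ 2 := by
  have hinner : ⟪e + t • (e - e'), T.adjoint (T e)⟫_ℝ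
      = (t + 1) * ‖T e‖ ^ 2 - t * ⟪T e', T e⟫_ℝ := by
    rw [T.adjoint_inner_right, map_add, map_smul, map_sub, inner_add_left,
      real_inner_smul_left, inner_sub_left, real_inner_self_eq_norm_sq]
    ring
  have hgrad : ‖T.adjoint (T e)‖ ^ 2 ≤ ‖T‖ ^ 2 * ‖T e‖ ^ 2 := by
    rw [← mul_pow]
    gcongr
    simpa using T.adjoint.le_opNorm (T e)
  have hcross : t * (2 * ⟪T e', T e⟫_ℝ) ≤ t * (‖T e'‖ ^ 2 + ‖T e‖ ^ 2) := by
    gcongr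
    linarith [real_inner_le_norm (T e') (T e), two_mul_le_add_sq ‖T e'‖ ‖T e‖]
  rw [norm_sub_sq_real, hinner]
  linarith

lemma adjoint_sqrt_smul_apply (A : X →L[ℝ] Y) {η : ℝ} (hη : 0 ≤ η) (x : X) :
    (√η • A).adjoint ((√η • A) x) = η • A.adjoint (A x) := by
  simp [smul_smul, Real.mul_self_sqrt hη]

end Hilbert

section Stack

variable {ι : Type*} [Fintype ι] {X : Type*} [NormedAddCommGroup X] [InnerProductSpace ℝ X]
  {Y : ι → Type*} [∀ i, NormedAddCommGroup (Y i)] [∀ i, InnerProductSpace ℝ (Y i)]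

/-- The operator `x ↦ (T i x)ᵢ` assembled from a finite family `T`, with values in the Hilbert
product. -/
noncomputable def stack (T : ∀ i, X →L[ℝ] Y i) : X →L[ℝ] PiLp 2 Y :=
  (PiLp.continuousLinearEquiv 2 ℝ Y).symm ∘L ContinuousLinearMap.pi T

variable (T : ∀ i, X →L[ℝ] Y i)

lemma norm_stack_sq (x : X) : ‖stack T x‖ ^ 2 = ∑ i, ‖T i x‖ ^ 2 :=
  PiLp.norm_sq_eq_of_L2 Y _

lemma norm_apply_le_norm_stack (x : X) (i : ι) : ‖T i x‖ ≤ ‖stack T x‖ :=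
  PiLp.norm_apply_le (stack T x) i

variable [CompleteSpace X] [∀ i, CompleteSpace (Y i)]

lemma abs_inner_adjoint_apply_le_norm_stack (i : ι) (e x : X) :
    |⟪(T i).adjoint (T i e), x⟫_ℝ| ≤ ‖stack T e‖ * ‖stack T x‖ := by
  rw [(T i).adjoint_inner_left]
  exact (abs_real_inner_le_norm _ _).trans <| mul_le_mul (norm_apply_le_norm_stack T e i)
    (norm_apply_le_norm_stack T x i) (norm_nonneg _) (norm_nonneg _)

/- Here and below `‖T‖` is the supremum norm `maxᵢ ‖T i‖` of the family. -/
lemma sum_norm_sub_adjoint_sq_add_le {t : ℝ} (ht : 0 ≤ t) (e e' : X) :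
    ∑ i, ‖e + t • (e - e') - (T i).adjoint (T i e)‖ ^ 2 + (t + 1) * ‖stack T e‖ ^ 2
        + (1 - ‖T‖ ^ 2) * ‖stack T e‖ ^ 2
      ≤ Fintype.card ι * ‖e + t • (e - e')‖ ^ 2 + t * ‖stack T e'‖ ^ 2 := by
  have hterm : ∀ i, ‖e + t • (e - e') - (T i).adjoint (T i e)‖ ^ 2 + (t + 1) * ‖T i e‖ ^ 2
      + (1 - ‖T‖ ^ 2) * ‖T i e‖ ^ 2 ≤ ‖e + t • (e - e')‖ ^ 2 + t * ‖T i e'‖ ^ 2 := fun i => by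
    refine le_trans ?_ (norm_sub_adjoint_sq_add_le (T i) ht e e')
    gcongr
    exact norm_le_pi_norm T i
  have hsum := sum_le_sum fun i (_ : i ∈ univ) => hterm i
  simpa only [sum_add_distrib, ← mul_sum, ← norm_stack_sq, sum_const, card_univ, nsmul_eq_mul]
    using hsum

end Stack

section HeavyBall

variable {X : Type*} [AddCommGroup X] [Module ℝ X]

/-- The heavy-ball recursion driven by the sequence `g` of gradients. At `n = 0` the momentum term
has coefficient `0`, so that the truncated index `n - 1` is immaterial. -/
def IsHeavyBall (g e : ℕ → X) : Prop :=
  ∀ n : ℕ, e (n + 1) = e n - ((n : ℝ) + 2)⁻¹ • g n + ((n : ℝ) / (n + 2)) • (e n - e (n - 1))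

/-- The extrapolated sequence, whose running means are the terms of `e`. -/
def extrapolation (e : ℕ → X) (n : ℕ) : X := e n + (n : ℝ) • (e n - e (n - 1))

lemma sum_extrapolation (e : ℕ → X) (n : ℕ) :
    ∑ k ∈ range (n + 1), extrapolation e k = ((n : ℝ) + 1) • e n := by
  induction n with
  | zero => simp [extrapolation]
  | succ n ih =>
    rw [sum_range_succ, ih, extrapolation, Nat.add_sub_cancel]
    push_cast
    module

namespace IsHeavyBall

variable {g e : ℕ → X}

lemma extrapolation_succ (he : IsHeavyBall g e) (n : ℕ) :
    extrapolation e (n + 1) = extrapolation e n - g n := by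
  have h : (n : ℝ) + 2 ≠ 0 := by positivity
  simp only [extrapolation, Nat.add_sub_cancel, he n]
  push_cast
  match_scalars <;> field_simp <;> ring

lemma extrapolation_eq (he : IsHeavyBall g e) (n : ℕ) :
    extrapolation e n = e 0 - ∑ j ∈ range n, g j := by
  induction n with
  | zero => simp [extrapolation]
  | succ n ih => rw [he.extrapolation_succ, ih, sum_range_succ, sub_sub]

lemma inner_le {X : Type*} [NormedAddCommGroup X] [InnerProductSpace ℝ X] {g e : ℕ → X}
    (he : IsHeavyBall g e) (n : ℕ) (x : X) :
    ⟪e n, x⟫_ℝ ≤ ⟪e 0, x⟫_ℝ + ∑ j ∈ range n, |⟪g j, x⟫_ℝ| := by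
  have hextrapolation : ∀ k ∈ range (n + 1),
      ⟪extrapolation e k, x⟫_ℝ ≤ ⟪e 0, x⟫_ℝ + ∑ j ∈ range n, |⟪g j, x⟫_ℝ| := fun k hk =>
    calc ⟪extrapolation e k, x⟫_ℝ = ⟪e 0, x⟫_ℝ + ∑ j ∈ range k, -⟪g j, x⟫_ℝ := by
          rw [he.extrapolation_eq, inner_sub_left, sum_inner, sum_neg_distrib, sub_eq_add_neg]
      _ ≤ ⟪e 0, x⟫_ℝ + ∑ j ∈ range k, |⟪g j, x⟫_ℝ| := by
          gcongr
          exact neg_le_abs _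
      _ ≤ ⟪e 0, x⟫_ℝ + ∑ j ∈ range n, |⟪g j, x⟫_ℝ| := by
          gcongr
          exact mem_range_succ_iff.1 hk
  have hmean := sum_le_card_nsmul _ _ _ hextrapolation
  rw [← sum_inner, sum_extrapolation, real_inner_smul_left, card_range, nsmul_eq_mul,
    Nat.cast_succ] at hmean
  exact le_of_mul_le_mul_left hmean (by positivity)

end IsHeavyBall

end HeavyBall

section StochasticHeavyBall

variable {p : ℕ} {hp : 0 < p} {X : Type*} [NormedAddCommGroup X] [InnerProductSpace ℝ X]
  {Y : Fin p → Type*} [∀ i, NormedAddCommGroup (Y i)] [∀ i, InnerProductSpace ℝ (Y i)]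

/-- The energy functional of the heavy-ball recursion along one path `e`. -/
noncomputable def energy (T : ∀ i, X →L[ℝ] Y i) (e : ℕ → X) (n : ℕ) : ℝ :=
  p * ‖extrapolation e n‖ ^ 2 + n * ‖stack T (e (n - 1))‖ ^ 2

/-- The mean squared residual `E[∑ᵢ ‖T i (e n)‖²]` of a process `e` adapted to the index path. -/
noncomputable def meanSqResidual (hp : 0 < p) (T : ∀ i, X →L[ℝ] Y i) (e : (ℕ → Fin p) → ℕ → X)
    (n : ℕ) : ℝ :=
  avg p hp n fun ω => ‖stack T (e ω n)‖ ^ 2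

lemma energy_nonneg (T : ∀ i, X →L[ℝ] Y i) (e : ℕ → X) (n : ℕ) : 0 ≤ energy T e n := by
  unfold energy
  positivity

variable {T : ∀ i, X →L[ℝ] Y i} {e : (ℕ → Fin p) → ℕ → X}

lemma meanSqResidual_nonneg (n : ℕ) : 0 ≤ meanSqResidual hp T e n :=
  avg_nonneg n fun _ => sq_nonneg _

variable [CompleteSpace X] [∀ i, CompleteSpace (Y i)] {e₀ : X}

/-- The error process, for exact data and unit step sizes, of the heavy-ball method that uses the
operator `T (ω n)` in step `n` along the index path `ω`. -/
structure IsStochasticHeavyBall (T : ∀ i, X →L[ℝ] Y i) (e₀ : X) (e : (ℕ → Fin p) → ℕ → X) :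
    Prop where
  start : ∀ ω, e ω 0 = e₀
  isHeavyBall : ∀ ω, IsHeavyBall (fun n => (T (ω n)).adjoint (T (ω n) (e ω n))) (e ω)

namespace IsStochasticHeavyBall

lemma dependsOn (he : IsStochasticHeavyBall T e₀ e) (n : ℕ) :
    DependsOn (fun ω => e ω n) (Set.Iio n) := by
  induction n using Nat.strong_induction_on with
  | _ n ih =>
    intro ω ω' h
    cases n with
    | zero => simp only [he.start]
    | succ n =>
      have hcur : e ω n = e ω' n :=
        (ih n n.lt_succ_self).mono (Set.Iio_subset_Iio n.le_succ) h
      have hprev : e ω (n - 1) = e ω' (n - 1) :=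
        (ih (n - 1) (by lia)).mono (Set.Iio_subset_Iio (by lia)) h
      have hidx : ω n = ω' n := h n n.lt_succ_self
      simp only [he.isHeavyBall ω n, he.isHeavyBall ω' n, hcur, hprev]
      rw [hidx]

lemma update_eq (he : IsStochasticHeavyBall T e₀ e) {k n : ℕ} (hkn : k ≤ n) (ω : ℕ → Fin p)
    (i : Fin p) : e (Function.update ω n i) k = e ω k :=
  he.dependsOn k fun _ hj => Function.update_of_ne (lt_of_lt_of_le hj hkn).ne _ _

lemma avg_norm_stack_sq (he : IsStochasticHeavyBall T e₀ e) {k n : ℕ} (hkn : k ≤ n) :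
    avg p hp n (fun ω => ‖stack T (e ω k)‖ ^ 2) = meanSqResidual hp T e k :=
  avg_of_dependsOn hkn fun _ _ h => congrArg (fun x => ‖stack T x‖ ^ 2) (he.dependsOn k h)

lemma energy_update_succ (he : IsStochasticHeavyBall T e₀ e) (ω : ℕ → Fin p) (n : ℕ)
    (i : Fin p) :
    energy T (e (Function.update ω n i)) (n + 1)
      = p * ‖extrapolation (e ω) n - (T i).adjoint (T i (e ω n))‖ ^ 2
        + (n + 1) * ‖stack T (e ω n)‖ ^ 2 := by
  rw [energy, (he.isHeavyBall _).extrapolation_succ, Function.update_self, Nat.add_sub_cancel,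
    extrapolation, he.update_eq le_rfl, he.update_eq (n.sub_le 1), Nat.cast_succ, extrapolation]

lemma mean_energy_update_succ_add_le (hp : 0 < p) (he : IsStochasticHeavyBall T e₀ e)
    (ω : ℕ → Fin p) (n : ℕ) :
    (p : ℝ)⁻¹ * ∑ i, energy T (e (Function.update ω n i)) (n + 1)
      + (1 - ‖T‖ ^ 2) * ‖stack T (e ω n)‖ ^ 2 ≤ energy T (e ω) n := by
  have hp0 : (p : ℝ) ≠ 0 := by exact_mod_cast hp.ne'
  have hmean : (p : ℝ)⁻¹ * ∑ i, energy T (e (Function.update ω n i)) (n + 1)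
      = ∑ i, ‖extrapolation (e ω) n - (T i).adjoint (T i (e ω n))‖ ^ 2
        + (n + 1) * ‖stack T (e ω n)‖ ^ 2 := by
    simp only [he.energy_update_succ, sum_add_distrib, ← mul_sum, sum_const, card_univ,
      Fintype.card_fin, nsmul_eq_mul]
    field_simp
  rw [hmean]
  simpa only [energy, extrapolation, Fintype.card_fin] using
    sum_norm_sub_adjoint_sq_add_le T n.cast_nonneg (e ω n) (e ω (n - 1))

lemma avg_energy_succ_add_le (he : IsStochasticHeavyBall T e₀ e) (n : ℕ) :
    avg p hp (n + 1) (fun ω => energy T (e ω) (n + 1))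
      + (1 - ‖T‖ ^ 2) * meanSqResidual hp T e n ≤ avg p hp n fun ω => energy T (e ω) n := by
  rw [avg_succ, meanSqResidual, ← avg_const_mul, ← avg_add]
  exact avg_mono n fun ω => he.mean_energy_update_succ_add_le hp ω n

lemma avg_energy_add_sum_le (he : IsStochasticHeavyBall T e₀ e) (n : ℕ) :
    avg p hp n (fun ω => energy T (e ω) n)
      + ∑ k ∈ range n, (1 - ‖T‖ ^ 2) * meanSqResidual hp T e k ≤ p * ‖e₀‖ ^ 2 := by
  induction n with
  | zero => simp [energy, extrapolation, he.start, avg_const]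
  | succ n ih =>
    rw [sum_range_succ]
    linarith [he.avg_energy_succ_add_le (hp := hp) n]

lemma summable_meanSqResidual (he : IsStochasticHeavyBall T e₀ e) (hT : ‖T‖ < 1) :
    Summable (meanSqResidual hp T e) := by
  have hgap : 0 < 1 - ‖T‖ ^ 2 := sub_pos.2 ((sq_lt_one_iff₀ (norm_nonneg T)).2 hT)
  refine (summable_mul_left_iff hgap.ne').1 <| summable_of_sum_range_le (c := p * ‖e₀‖ ^ 2)
    (fun n => mul_nonneg hgap.le (meanSqResidual_nonneg n)) fun n => ?_
  exact (le_add_of_nonneg_left (avg_nonneg n fun ω => energy_nonneg T (e ω) n)).trans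
    (he.avg_energy_add_sum_le (hp := hp) n)

lemma mul_meanSqResidual_le (he : IsStochasticHeavyBall T e₀ e) (hT : ‖T‖ < 1) (n : ℕ) :
    n * meanSqResidual hp T e n ≤ p * ‖e₀‖ ^ 2 := by
  have hgap : 0 < 1 - ‖T‖ ^ 2 := sub_pos.2 ((sq_lt_one_iff₀ (norm_nonneg T)).2 hT)
  have hsum : 0 ≤ ∑ k ∈ range (n + 1), (1 - ‖T‖ ^ 2) * meanSqResidual hp T e k :=
    sum_nonneg fun k _ => mul_nonneg hgap.le (meanSqResidual_nonneg k)
  calc n * meanSqResidual hp T e n ≤ (n + 1 : ℕ) * meanSqResidual hp T e n := by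
        gcongr
        exacts [meanSqResidual_nonneg n, n.le_succ]
    _ = avg p hp (n + 1) fun ω => (n + 1 : ℕ) * ‖stack T (e ω n)‖ ^ 2 := by
        rw [avg_const_mul, he.avg_norm_stack_sq n.le_succ]
    _ ≤ avg p hp (n + 1) fun ω => energy T (e ω) (n + 1) :=
        avg_mono _ fun ω => le_add_of_nonneg_left (by positivity)
    _ ≤ p * ‖e₀‖ ^ 2 := by linarith [he.avg_energy_add_sum_le (hp := hp) (n + 1)]

lemma norm_sq_le (he : IsStochasticHeavyBall T e₀ e) (ω : ℕ → Fin p) (n : ℕ) :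
    ‖e ω n‖ ^ 2
      ≤ ⟪e₀, e ω n⟫_ℝ + ∑ j ∈ range n, ‖stack T (e ω j)‖ * ‖stack T (e ω n)‖ := by
  rw [← real_inner_self_eq_norm_sq, ← he.start ω]
  refine ((he.isHeavyBall ω).inner_le n (e ω n)).trans ?_
  gcongr
  exact abs_inner_adjoint_apply_le_norm_stack T _ _ _

lemma avg_norm_stack_mul_le (he : IsStochasticHeavyBall T e₀ e) {j n : ℕ} (hjn : j ≤ n) :
    avg p hp n (fun ω => ‖stack T (e ω j)‖ * ‖stack T (e ω n)‖)
      ≤ √(meanSqResidual hp T e n) * √(meanSqResidual hp T e j) := by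
  rw [mul_comm, ← he.avg_norm_stack_sq hjn]
  exact avg_mul_le_sqrt_mul_sqrt n _ _

lemma avg_norm_sq_le (he : IsStochasticHeavyBall T e₀ e) {ε K : ℝ}
    (hK : ∀ x, ⟪e₀, x⟫_ℝ ≤ ε * ‖x‖ + K * ‖stack T x‖) (n : ℕ) :
    avg p hp n (fun ω => ‖e ω n‖ ^ 2)
      ≤ ε ^ 2 + 2 * (|K| * √(meanSqResidual hp T e n) + √(meanSqResidual hp T e n) *
        ∑ j ∈ range n, √(meanSqResidual hp T e j)) := by
  have hpath : ∀ ω, ‖e ω n‖ ^ 2 ≤ ε ^ 2 + 2 * (K * ‖stack T (e ω n)‖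
      + ∑ j ∈ range n, ‖stack T (e ω j)‖ * ‖stack T (e ω n)‖) := fun ω => by
    linarith [he.norm_sq_le ω n, hK (e ω n), two_mul_le_add_sq ε ‖e ω n‖]
  have hlinear : K * avg p hp n (fun ω => ‖stack T (e ω n)‖)
      ≤ |K| * √(meanSqResidual hp T e n) := by
    simpa [meanSqResidual, avg_const_mul, avg_const, Real.sqrt_sq_eq_abs] using
      avg_mul_le_sqrt_mul_sqrt (hp := hp) n (fun _ => K) fun ω => ‖stack T (e ω n)‖
  refine (avg_mono n hpath).trans ?_
  simp only [avg_add, avg_const_mul, avg_sum, avg_const, mul_sum (range n)]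
  gcongr with j hj
  exact he.avg_norm_stack_mul_le (mem_range.1 hj).le

theorem tendsto_avg_norm_sq (he : IsStochasticHeavyBall T e₀ e) (hT : ‖T‖ < 1)
    (h₀ : e₀ ∈ (stack T).kerᗮ) :
    Tendsto (fun n : ℕ => avg p hp n fun ω => ‖e ω n‖ ^ 2) atTop (𝓝 0) := by
  set a : ℕ → ℝ := fun n => √(meanSqResidual hp T e n)
  have ha_sq : ∀ n, a n ^ 2 = meanSqResidual hp T e n := fun n =>
    Real.sq_sqrt (meanSqResidual_nonneg n)
  have hsummable : Summable (meanSqResidual hp T e) := he.summable_meanSqResidual hT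
  have ha : Tendsto a atTop (𝓝 0) := by simpa using hsummable.tendsto_atTop_zero.sqrt
  have hmul : Tendsto (fun n => a n * ∑ j ∈ range n, a j) atTop (𝓝 0) :=
    tendsto_mul_sum_range_of_summable_sq (C := p * ‖e₀‖ ^ 2) (fun n => Real.sqrt_nonneg _)
      (by simpa only [ha_sq] using hsummable)
      (by simpa only [ha_sq] using he.mul_meanSqResidual_le hT)
  refine tendsto_order.2 ⟨fun b hb => Eventually.of_forall fun n =>
    hb.trans_le (avg_nonneg n fun _ => sq_nonneg _), fun δ hδ => ?_⟩
  obtain ⟨K, hK⟩ := exists_inner_le_of_mem_orthogonal_ker (stack T) h₀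
    (Real.sqrt_pos.2 (half_pos hδ))
  have hlim : Tendsto (fun n => 2 * (|K| * a n + a n * ∑ j ∈ range n, a j)) atTop (𝓝 0) := by
    simpa using ((ha.const_mul |K|).add hmul).const_mul 2
  filter_upwards [hlim.eventually_lt_const (half_pos hδ)] with n hn
  linarith [he.avg_norm_sq_le (hp := hp) hK n, Real.sq_sqrt (half_pos hδ).le]

end IsStochasticHeavyBall

end StochasticHeavyBall

/-- **Theorem SHBM.thm2 (convergence with exact data).**  Assume `0 < η i < 1/‖A i‖²`
and let `x†` be the `x₀`-minimal norm solution of `A x = y`.  Then the exact-data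
heavy-ball iterates satisfy `lim_{n → ∞} E[‖x n − x†‖²] = 0`. -/
theorem stmt_14 {p : ℕ} (hp : 0 < p) {X : Type*} [NormedAddCommGroup X]
    [InnerProductSpace ℝ X] [CompleteSpace X]
    {Y : Fin p → Type*} [∀ i, NormedAddCommGroup (Y i)] [∀ i, InnerProductSpace ℝ (Y i)]
    [∀ i, CompleteSpace (Y i)]
    (A : ∀ i, X →L[ℝ] Y i) (y : ∀ i, Y i)
    (η : Fin p → ℝ) (hη : ∀ i, 0 < η i ∧ η i < 1 / ‖A i‖ ^ 2)
    (x₀ xdag : X)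
    (hdag : ∀ i, (A i) xdag = y i)
    (hmin : ∀ x' : X, (∀ i, (A i) x' = y i) → ‖xdag - x₀‖ ≤ ‖x' - x₀‖)
    (x : (ℕ → Fin p) → ℕ → X)
    (hx0 : ∀ ω, x ω 0 = x₀)
    (hx : ∀ ω, ∀ n : ℕ, x ω (n + 1) = x ω n
      - (((n : ℝ) + 2)⁻¹ * η (ω n)) • ((A (ω n)).adjoint ((A (ω n)) (x ω n) - y (ω n)))
      + ((n : ℝ) / ((n : ℝ) + 2)) • (x ω n - x ω (n - 1))) :
    Filter.Tendsto (fun n : ℕ => avg p hp n (fun ω => ‖x ω n - xdag‖ ^ 2))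
      Filter.atTop (nhds 0) := by
  set T : ∀ i, X →L[ℝ] Y i := fun i => √(η i) • A i
  have hT : ‖T‖ < 1 :=
    (pi_norm_lt_iff one_pos).2 fun i => norm_sqrt_smul_lt_one (A i) (hη i).1 (hη i).2
  have herror : IsStochasticHeavyBall T (x₀ - xdag) fun ω n => x ω n - xdag :=
    { start := fun ω => by rw [hx0]
      isHeavyBall := fun ω n => by
        simp only [T, adjoint_sqrt_smul_apply _ (hη _).1.le, map_sub (A _), hdag]
        rw [hx]
        module }
  have horth : x₀ - xdag ∈ (stack T).kerᗮ := by
    refine mem_orthogonal_of_forall_norm_le fun w hw => ?_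
    have hAw : ∀ i, A i w = 0 := fun i => by
      have hTw : √(η i) • A i w = 0 := congrArg (fun v : PiLp 2 Y => v i) hw
      exact (smul_eq_zero.1 hTw).resolve_left (Real.sqrt_pos.2 (hη i).1).ne'
    have hle := hmin (xdag + w) fun i => by rw [map_add, hdag, hAw, add_zero]
    rwa [← norm_sub_rev x₀, ← norm_sub_rev x₀, ← sub_sub] at hle
  exact herror.tendsto_avg_norm_sq hT horth
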